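/- (Unitarity of the Tratnik functions.) Under the stated hypotheses, for all integers n₁, n₂, n₁', n₂' ≥ 0 with n₁+n₂ ≤ N and n₁'+n₂' ≤ N: Σ_{m₁,m₂ ≥ 0, m₁+m₂ ≤ N} 𝒯_{n₁,n₂}(m₁,m₂)·𝒯_{n₁',n₂'}(m₁,m₂) = δ_{n₁,n₁'}·δ_{n₂,n₂'}; and dually, for all integers m₁, m₂, m₁', m₂' ≥ 0 with m₁+m₂ ≤ N and m₁'+m₂' ≤ N: Σ_{n₁,n₂ ≥ 0, n₁+n₂ ≤ N} 𝒯_{n₁,n₂}(m₁,m₂)·𝒯_{n₁,n₂}(m₁',m₂') = δ_{m₁,m₁'}·δ_{m₂,m₂'}. -/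

import Mathlib

noncomputable section

open Finset Real

/-- Pochhammer symbol `(y)_k = y(y+1)⋯(y+k−1)` for real `y`. -/
def poch (y : ℝ) (k : ℕ) : ℝ := ∏ i ∈ Finset.range k, (y + i)

/-- The terminating Racah function `r_n(m; α, β, −𝒩−1, δ)` on the grid `{0,…,𝒩}`:
`r_n(m) = ∑_{k=0}^{n} (−n)_k (n+α+β+1)_k (−m)_k (m−𝒩+δ)_k /
  ((α+1)_k (β+δ+1)_k (−𝒩)_k k!)`. -/
def racah (𝒩 : ℕ) (α β δ : ℝ) (n m : ℕ) : ℝ :=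
  ∑ k ∈ Finset.range (n + 1),
    (poch (-(n : ℝ)) k * poch ((n : ℝ) + α + β + 1) k * poch (-(m : ℝ)) k *
        poch ((m : ℝ) - (𝒩 : ℝ) + δ) k) /
      (poch (α + 1) k * poch (β + δ + 1) k * poch (-(𝒩 : ℝ)) k * (Nat.factorial k : ℝ))

/-- Coefficient `A_n` of the Racah recurrence relation. -/
def coeffA (𝒩 : ℕ) (α β δ : ℝ) (n : ℕ) : ℝ :=
  ((n : ℝ) + α + 1) * ((n : ℝ) + β + δ + 1) * ((n : ℝ) - (𝒩 : ℝ)) * ((n : ℝ) + α + β + 1) /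
    ((2 * (n : ℝ) + α + β + 1) * (2 * (n : ℝ) + α + β + 2))

/-- Coefficient `C_n` of the Racah recurrence relation. -/
def coeffC (𝒩 : ℕ) (α β δ : ℝ) (n : ℕ) : ℝ :=
  (n : ℝ) * ((n : ℝ) + α + β + (𝒩 : ℝ) + 1) * ((n : ℝ) + α - δ) * ((n : ℝ) + β) /
    ((2 * (n : ℝ) + α + β) * (2 * (n : ℝ) + α + β + 1))

/-- Coefficient `B_m` of the Racah difference relation. -/
def coeffB (𝒩 : ℕ) (α β δ : ℝ) (m : ℕ) : ℝ :=
  ((m : ℝ) + α + 1) * ((m : ℝ) + β + δ + 1) * ((m : ℝ) - (𝒩 : ℝ)) * ((m : ℝ) - (𝒩 : ℝ) + δ) /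
    ((2 * (m : ℝ) - (𝒩 : ℝ) + δ) * (2 * (m : ℝ) - (𝒩 : ℝ) + δ + 1))

/-- Coefficient `D_m` of the Racah difference relation. -/
def coeffD (𝒩 : ℕ) (α β δ : ℝ) (m : ℕ) : ℝ :=
  (m : ℝ) * ((m : ℝ) - (𝒩 : ℝ) - 1 - α + δ) * ((m : ℝ) - (𝒩 : ℝ) - 1 - β) * ((m : ℝ) + δ) /
    ((2 * (m : ℝ) - (𝒩 : ℝ) - 1 + δ) * (2 * (m : ℝ) - (𝒩 : ℝ) + δ))

/-- Normalization constant `κ = (α−δ+1)_𝒩 (β+1)_𝒩 / ((α+β+2)_𝒩 (−δ)_𝒩)`. -/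
def kappa (𝒩 : ℕ) (α β δ : ℝ) : ℝ :=
  poch (α - δ + 1) 𝒩 * poch (β + 1) 𝒩 / (poch (α + β + 2) 𝒩 * poch (-δ) 𝒩)

/-- The orthonormalized Racah function `𝒫_n(m; α, β, −𝒩−1, δ)`. -/
def Pfun (𝒩 : ℕ) (α β δ : ℝ) (n m : ℕ) : ℝ :=
  Real.sqrt (kappa 𝒩 α β δ) *
    (∏ i ∈ Finset.range n,
      coeffA 𝒩 α β δ i / Real.sqrt (coeffA 𝒩 α β δ i * coeffC 𝒩 α β δ (i + 1))) *
    (∏ j ∈ Finset.range m,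
      coeffB 𝒩 α β δ j / Real.sqrt (coeffB 𝒩 α β δ j * coeffD 𝒩 α β δ (j + 1))) *
    racah 𝒩 α β δ n m

/-- The positivity conditions making `𝒫_·(·; α, β, −𝒩−1, δ)` well defined. -/
def PosCond (𝒩 : ℕ) (α β δ : ℝ) : Prop :=
  (∀ i < 𝒩, 0 < coeffA 𝒩 α β δ i * coeffC 𝒩 α β δ (i + 1)) ∧
  (∀ j < 𝒩, 0 < coeffB 𝒩 α β δ j * coeffD 𝒩 α β δ (j + 1)) ∧
  0 < kappa 𝒩 α β δ

/-- The bivariate Tratnik function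
`𝒯_{n₁,n₂}(m₁,m₂) = 𝒫_{n₁}(m₁; −2j⁽²⁾−1, −2j⁽¹⁾−1, n₂−N−1, N−n₂−2j⁽²⁾+2j⁽³⁾+1)
· 𝒫_{n₂}(m₂; −2j⁽⁰⁾−1, −2j⁽⁴⁾−1, m₁−N−1, N−m₁−2j⁽⁰⁾−2j⁽¹⁾−1)`
for admissible indices, and `0` outside the admissible range. -/
def Tratnik (j0 j1 j2 j3 j4 : ℝ) (N : ℕ) (n1 n2 m1 m2 : ℕ) : ℝ :=
  if n1 + n2 ≤ N ∧ m1 + m2 ≤ N ∧ n2 + m1 ≤ N then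
    Pfun (N - n2) (-2*j2 - 1) (-2*j1 - 1) ((N : ℝ) - n2 - 2*j2 + 2*j3 + 1) n1 m1 *
      Pfun (N - m1) (-2*j0 - 1) (-2*j4 - 1) ((N : ℝ) - m1 - 2*j0 - 2*j1 - 1) n2 m2
  else 0

/-!
A Tratnik function is a product of two Racah functions that share the indices `n₂` and `m₁`, so as
a matrix it is a product of two block-diagonal matrices, and its unitarity reduces to that of one
Racah block.

For one block, `r_n(m)` is an eigenfunction in `m` of a second-order difference operator that is
symmetric for the weight `∏ B_j / D_{j+1}`, with distinct eigenvalues, whence orthogonality. By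
duality it also satisfies a three-term recurrence in `n`, which expresses all norms through that of
`r₀ = 1`. The latter is the total mass of the weight; applying the difference operator to the basis
`(-m)_k (m-𝒩+δ)_k` gives a first-order recursion in `k` for the moments of the weight, and the
moment `k = 𝒩` has a single term, so the total mass can be read off: it is `1 / κ`.
-/

section DifferenceOperator

variable {K : Type*} [Field K]

/-- The second-order difference operator `f ↦ B_m (f(m+1) - f(m)) - D_m (f(m) - f(m-1))`. At
`m = 0` truncated subtraction makes the second term vanish. -/
def diffOp (B D f : ℕ → K) (m : ℕ) : K :=
  B m * (f (m + 1) - f m) - D m * (f m - f (m - 1))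

/-- The reversible weight of `diffOp B D`, i.e. the solution `w` of the detailed balance equations
`w (m + 1) * D (m + 1) = w m * B m` with `w 0 = 1`. -/
def reversibleWeight (B D : ℕ → K) (m : ℕ) : K := ∏ j ∈ range m, B j / D (j + 1)

/-- `diffOp B D` restricts to functions on `{0, …, M}` and no coefficient linking two neighbours
in this interval vanishes. -/
structure IsIrreducibleUpTo (B D : ℕ → K) (M : ℕ) : Prop where
  last_eq_zero : B M = 0
  up_ne_zero : ∀ j < M, B j ≠ 0
  down_ne_zero : ∀ j < M, D (j + 1) ≠ 0

/-- The bilinear form with weight `w` on functions on `{0, …, M}`. -/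
def weightedInner (w : ℕ → K) (M : ℕ) (f g : ℕ → K) : K :=
  ∑ m ∈ range (M + 1), w m * (f m * g m)

variable {A B C D w : ℕ → K} {M : ℕ}

lemma diffOp_sum (S : Finset ℕ) (c : ℕ → K) (f : ℕ → ℕ → K) (m : ℕ) :
    diffOp B D (fun m => ∑ k ∈ S, c k * f k m) m = ∑ k ∈ S, c k * diffOp B D (f k) m := by
  simp only [diffOp, mul_sub, sum_sub_distrib, mul_sum, mul_left_comm]

lemma reversibleWeight_zero : reversibleWeight B D 0 = 1 := prod_range_zero _

lemma reversibleWeight_succ (m : ℕ) :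
    reversibleWeight B D (m + 1) = reversibleWeight B D m * (B m / D (m + 1)) :=
  prod_range_succ _ _

lemma reversibleWeight_succ_mul {m : ℕ} (hD : D (m + 1) ≠ 0) :
    reversibleWeight B D (m + 1) * D (m + 1) = reversibleWeight B D m * B m := by
  rw [reversibleWeight_succ, mul_assoc, div_mul_cancel₀ _ hD]

lemma weightedInner_comm (f g : ℕ → K) : weightedInner w M f g = weightedInner w M g f := by
  simp only [weightedInner, mul_comm]

lemma weightedInner_congr_left {f f' : ℕ → K} (h : ∀ m ≤ M, f m = f' m) (g : ℕ → K) :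
    weightedInner w M f g = weightedInner w M f' g :=
  sum_congr rfl fun m hm => by rw [h m (mem_range_succ_iff.1 hm)]

lemma weightedInner_const_mul_left (c : K) (f g : ℕ → K) :
    weightedInner w M (fun m => c * f m) g = c * weightedInner w M f g := by
  simp only [weightedInner, mul_sum, mul_assoc, mul_left_comm c]

lemma weightedInner_sub_left (f f' g : ℕ → K) :
    weightedInner w M (fun m => f m - f' m) g = weightedInner w M f g - weightedInner w M f' g := by
  simp only [weightedInner, sub_mul, mul_sub, sum_sub_distrib]

lemma weightedInner_mul_left (x f g : ℕ → K) :
    weightedInner w M (fun m => x m * f m) g = weightedInner w M f (fun m => x m * g m) := by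
  simp only [weightedInner, mul_assoc, mul_left_comm]

lemma weightedInner_diffOp_left (φ : ℕ → ℕ → K) (g : ℕ → K) (n : ℕ) :
    weightedInner w M (fun m => diffOp A C (fun i => φ i m) n) g =
      diffOp A C (fun i => weightedInner w M (φ i) g) n := by
  simp only [weightedInner, diffOp, mul_sub, sub_mul, mul_sum, sum_sub_distrib, mul_assoc,
    mul_left_comm (w _)]

lemma weightedInner_diffOp_summation_by_parts (hD : ∀ j < M, D (j + 1) ≠ 0) (f g : ℕ → K) :
    weightedInner (reversibleWeight B D) M (diffOp B D f) g =
      reversibleWeight B D M * B M * (f (M + 1) - f M) * g M -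
        ∑ m ∈ range M,
          reversibleWeight B D m * B m * ((f (m + 1) - f m) * (g (m + 1) - g m)) := by
  unfold weightedInner
  induction M with
  | zero => simp [diffOp, mul_assoc]
  | succ M ih =>
    rw [sum_range_succ, ih fun j hj => hD j (hj.trans M.lt_succ_self), sum_range_succ _ M]
    unfold diffOp
    rw [Nat.add_sub_cancel]
    linear_combination
      -((f (M + 1) - f M) * g (M + 1)) * reversibleWeight_succ_mul (B := B) (hD M M.lt_succ_self)

lemma IsIrreducibleUpTo.weightedInner_diffOp (h : IsIrreducibleUpTo B D M) (f g : ℕ → K) :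
    weightedInner (reversibleWeight B D) M (diffOp B D f) g =
      -∑ m ∈ range M,
        reversibleWeight B D m * B m * ((f (m + 1) - f m) * (g (m + 1) - g m)) := by
  rw [weightedInner_diffOp_summation_by_parts h.down_ne_zero, h.last_eq_zero]
  ring

lemma IsIrreducibleUpTo.weightedInner_diffOp_symm (h : IsIrreducibleUpTo B D M) (f g : ℕ → K) :
    weightedInner (reversibleWeight B D) M (diffOp B D f) g =
      weightedInner (reversibleWeight B D) M (diffOp B D g) f := by
  simp only [h.weightedInner_diffOp, mul_comm (f _ - f _)]

lemma IsIrreducibleUpTo.weightedInner_diffOp_one (h : IsIrreducibleUpTo B D M) (f : ℕ → K) :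
    weightedInner (reversibleWeight B D) M (diffOp B D f) 1 = 0 := by
  simp [h.weightedInner_diffOp]

lemma IsIrreducibleUpTo.weightedInner_eq_zero_of_eigenvalue_ne (h : IsIrreducibleUpTo B D M)
    {f g : ℕ → K} {μ ν : K} (hf : ∀ m ≤ M, diffOp B D f m = μ * f m)
    (hg : ∀ m ≤ M, diffOp B D g m = ν * g m) (hμν : μ ≠ ν) :
    weightedInner (reversibleWeight B D) M f g = 0 := by
  have symm := h.weightedInner_diffOp_symm f g
  rw [weightedInner_congr_left hf, weightedInner_congr_left hg, weightedInner_const_mul_left,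
    weightedInner_const_mul_left, weightedInner_comm g f] at symm
  exact (mul_eq_mul_right_iff.1 symm).resolve_left hμν

/- Pair `x φ n` with `φ (n + 1)` and expand `x φ n`, respectively `x φ (n + 1)`, by the recurrence:
orthogonality leaves one term on each side. -/
lemma IsIrreducibleUpTo.norm_succ_of_recurrence (h : IsIrreducibleUpTo A C M)
    {φ : ℕ → ℕ → K} {x : ℕ → K}
    (hrec : ∀ n ≤ M, ∀ m ≤ M, diffOp A C (fun i => φ i m) n = x m * φ n m)
    (horth : ∀ n ≤ M, ∀ n' ≤ M, n ≠ n' → weightedInner w M (φ n) (φ n') = 0)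
    {n : ℕ} (hn : n < M) :
    A n * weightedInner w M (φ (n + 1)) (φ (n + 1)) =
      C (n + 1) * weightedInner w M (φ n) (φ n) := by
  have expand : ∀ i ≤ M, ∀ g, weightedInner w M (fun m => x m * φ i m) g =
      diffOp A C (fun i => weightedInner w M (φ i) g) i := fun i hi g => by
    rw [← weightedInner_diffOp_left, weightedInner_congr_left (hrec i hi)]
  have pairing : diffOp A C (fun i => weightedInner w M (φ i) (φ (n + 1))) n =
      diffOp A C (fun i => weightedInner w M (φ i) (φ n)) (n + 1) := by
    rw [← expand n hn.le, ← expand (n + 1) hn, weightedInner_mul_left, weightedInner_comm]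
  have top : A (n + 1) * weightedInner w M (φ (n + 2)) (φ n) = 0 := by
    rcases Nat.lt_or_ge (n + 1) M with hlt | hge
    · rw [horth (n + 2) hlt n hn.le (by omega), mul_zero]
    · rw [show n + 1 = M by omega, h.last_eq_zero, zero_mul]
  simp only [diffOp, Nat.add_sub_cancel] at pairing
  rw [horth n hn.le (n + 1) hn (by omega), horth (n - 1) (by omega) (n + 1) hn (by omega),
    horth (n + 1) hn n hn.le (by omega)] at pairing
  linear_combination pairing + top

lemma IsIrreducibleUpTo.reversibleWeight_mul_norm (h : IsIrreducibleUpTo A C M)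
    {φ : ℕ → ℕ → K} {x : ℕ → K}
    (hrec : ∀ n ≤ M, ∀ m ≤ M, diffOp A C (fun i => φ i m) n = x m * φ n m)
    (horth : ∀ n ≤ M, ∀ n' ≤ M, n ≠ n' → weightedInner w M (φ n) (φ n') = 0)
    {n : ℕ} (hn : n ≤ M) :
    reversibleWeight A C n * weightedInner w M (φ n) (φ n) = weightedInner w M (φ 0) (φ 0) := by
  induction n with
  | zero => rw [reversibleWeight_zero, one_mul]
  | succ n ih =>
    rw [← ih (Nat.le_of_succ_le hn)]
    refine mul_left_cancel₀ (h.down_ne_zero n hn) ?_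
    linear_combination
      weightedInner w M (φ (n + 1)) (φ (n + 1)) * reversibleWeight_succ_mul (h.down_ne_zero n hn) +
        reversibleWeight A C n * h.norm_succ_of_recurrence hrec horth hn

end DifferenceOperator

section Pochhammer

lemma poch_zero (y : ℝ) : poch y 0 = 1 := prod_range_zero _

lemma poch_succ (y : ℝ) (k : ℕ) : poch y (k + 1) = poch y k * (y + k) := prod_range_succ _ _

lemma poch_succ_left (y : ℝ) (k : ℕ) : poch y (k + 1) = y * poch (y + 1) k := by
  rw [poch, prod_range_succ', Nat.cast_zero, add_zero, mul_comm]
  exact congrArg (y * ·) (prod_congr rfl fun i _ => by push_cast; ring)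

lemma poch_ne_zero {y : ℝ} {k : ℕ} (h : ∀ i < k, y + i ≠ 0) : poch y k ≠ 0 :=
  prod_ne_zero_iff.2 fun i hi => h i (mem_range.1 hi)

lemma poch_neg_natCast_eq_zero {m k : ℕ} (h : m < k) : poch (-(m : ℝ)) k = 0 :=
  prod_eq_zero (mem_range.2 h) (neg_add_cancel _)

lemma poch_one (k : ℕ) : poch 1 k = k.factorial := by
  rw [poch, ← prod_range_add_one_eq_factorial, Nat.cast_prod]
  exact prod_congr rfl fun i _ => by push_cast; ring

lemma poch_neg_natCast_sub (M : ℕ) (c : ℝ) : poch (-M - c) M = (-1) ^ M * poch (c + 1) M := by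
  have sign : (-1 : ℝ) ^ M = ∏ _j ∈ range M, (-1 : ℝ) := by simp
  rw [poch, poch, sign, ← prod_mul_distrib, ← prod_range_reflect]
  refine prod_congr rfl fun j hj => ?_
  have hj : 1 + j ≤ M := by have := mem_range.1 hj; omega
  rw [Nat.sub_sub, Nat.cast_sub hj]
  push_cast
  ring

/-- The Newton-type basis `(-x)_k (x+s)_k` of polynomials in `x (x+s)`, in which the Racah
functions are expanded. -/
def latticeBasis (s x : ℝ) (k : ℕ) : ℝ := poch (-x) k * poch (x + s) k

lemma latticeBasis_zero (s x : ℝ) : latticeBasis s x 0 = 1 := by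
  rw [latticeBasis, poch_zero, poch_zero, one_mul]

lemma latticeBasis_succ (s x : ℝ) (k : ℕ) :
    latticeBasis s x (k + 1) = latticeBasis s x k * ((k - x) * (k + x + s)) := by
  simp only [latticeBasis, poch_succ]
  ring

lemma latticeBasis_natCast_eq_zero (s : ℝ) {m k : ℕ} (h : m < k) : latticeBasis s m k = 0 := by
  rw [latticeBasis, poch_neg_natCast_eq_zero h, zero_mul]

lemma natCast_mul_latticeBasis_zero (s : ℝ) (k : ℕ) : (k : ℝ) * latticeBasis s 0 k = 0 := by
  rcases k.eq_zero_or_pos with rfl | hk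
  · rw [Nat.cast_zero, zero_mul]
  · have vanish := latticeBasis_natCast_eq_zero s hk
    rw [Nat.cast_zero] at vanish
    rw [vanish, mul_zero]

lemma latticeBasis_reflect (s x : ℝ) (k : ℕ) : latticeBasis s (-x - s) k = latticeBasis s x k := by
  rw [latticeBasis, latticeBasis, mul_comm]
  congr 2 <;> ring

lemma latticeBasis_forward_diff (s x : ℝ) (k : ℕ) :
    (x + s) * (latticeBasis s (x + 1) (k + 1) - latticeBasis s x (k + 1)) =
      -(k + 1) * (2 * x + s + 1) * (x + s + k) * latticeBasis s x k := by
  have neg_factor : poch (-(x + 1)) (k + 1) = -(x + 1) * poch (-x) k := by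
    rw [poch_succ_left]
    congr 2
    ring
  have pos_factor : (x + s) * poch (x + 1 + s) (k + 1) =
      poch (x + s) k * (x + s + k) * (x + s + (k + 1)) := by
    rw [add_right_comm, ← poch_succ_left, poch_succ, poch_succ, Nat.cast_succ]
  rw [latticeBasis_succ s x, latticeBasis, latticeBasis, neg_factor]
  linear_combination (-(x + 1) * poch (-x) k) * pos_factor

lemma latticeBasis_backward_diff (s x : ℝ) (k : ℕ) :
    x * (latticeBasis s x (k + 1) - latticeBasis s (x - 1) (k + 1)) =
      (k + 1) * (2 * x - 1 + s) * (k - x) * latticeBasis s x k := by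
  have reflected := latticeBasis_forward_diff s (-x - s) k
  rw [show -x - s + 1 = -(x - 1) - s by ring] at reflected
  simp only [latticeBasis_reflect] at reflected
  linear_combination reflected

end Pochhammer

section RacahBlock

variable {M : ℕ} {α β δ : ℝ}

lemma coeffB_ne_zero_iff (m : ℕ) :
    coeffB M α β δ m ≠ 0 ↔
      ((m + α + 1 ≠ 0 ∧ m + β + δ + 1 ≠ 0 ∧ (m : ℝ) - M ≠ 0 ∧ m - M + δ ≠ 0) ∧
        2 * m - M + δ ≠ 0 ∧ 2 * m - M + δ + 1 ≠ 0) := by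
  simp only [coeffB, ne_eq, div_eq_zero_iff, mul_eq_zero, not_or, and_assoc]

lemma coeffD_succ_ne_zero_iff (m : ℕ) :
    coeffD M α β δ (m + 1) ≠ 0 ↔
      ((m - M - α + δ ≠ 0 ∧ m - M - β ≠ 0 ∧ m + 1 + δ ≠ 0) ∧
        2 * m - M + δ + 1 ≠ 0 ∧ 2 * (m + 1) - M + δ ≠ 0) := by
  have hm : (m : ℝ) + 1 ≠ 0 := m.cast_add_one_ne_zero
  have h1 : (m : ℝ) + 1 - M - 1 - α + δ = m - M - α + δ := by ring
  have h2 : (m : ℝ) + 1 - M - 1 - β = m - M - β := by ring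
  have h3 : 2 * ((m : ℝ) + 1) - M - 1 + δ = 2 * m - M + δ + 1 := by ring
  simp only [coeffD, ne_eq, div_eq_zero_iff, mul_eq_zero, not_or, and_assoc, Nat.cast_succ, hm,
    h1, h2, h3, not_false_eq_true, true_and]

lemma coeffD_zero : coeffD M α β δ 0 = 0 := by
  simp [coeffD]

lemma PosCond.isIrreducibleUpTo_coeffB_coeffD (h : PosCond M α β δ) :
    IsIrreducibleUpTo (coeffB M α β δ) (coeffD M α β δ) M where
  last_eq_zero := by simp [coeffB]
  up_ne_zero j hj := left_ne_zero_of_mul (h.2.1 j hj).ne'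
  down_ne_zero j hj := right_ne_zero_of_mul (h.2.1 j hj).ne'

lemma PosCond.isIrreducibleUpTo_coeffA_coeffC (h : PosCond M α β δ) :
    IsIrreducibleUpTo (coeffA M α β δ) (coeffC M α β δ) M where
  last_eq_zero := by simp [coeffA]
  up_ne_zero j hj := left_ne_zero_of_mul (h.1 j hj).ne'
  down_ne_zero j hj := right_ne_zero_of_mul (h.1 j hj).ne'

lemma coeffB_mul_forward_diff (h : IsIrreducibleUpTo (coeffB M α β δ) (coeffD M α β δ) M)
    {m : ℕ} (hm : m ≤ M) (k : ℕ) :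
    (2 * m - M + δ) * (coeffB M α β δ m *
        (latticeBasis (δ - M) ↑(m + 1) (k + 1) - latticeBasis (δ - M) m (k + 1))) =
      -(k + 1) * (m + α + 1) * (m + β + δ + 1) * (m - M) * (m - M + δ + k) *
        latticeBasis (δ - M) m k := by
  rcases hm.lt_or_eq with hlt | rfl
  · obtain ⟨-, h₀, h₁⟩ := (coeffB_ne_zero_iff m).1 (h.up_ne_zero m hlt)
    have diff := latticeBasis_forward_diff (δ - M) m k
    rw [coeffB, Nat.cast_succ]
    generalize latticeBasis (δ - M) (m + 1) (k + 1) - latticeBasis (δ - M) m (k + 1) = Δ at diff ⊢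
    field_simp
    linear_combination (m + α + 1) * (m + β + δ + 1) * (m - M) * diff
  · simp [h.last_eq_zero]

lemma coeffD_mul_backward_diff (h : IsIrreducibleUpTo (coeffB M α β δ) (coeffD M α β δ) M)
    {m : ℕ} (hm : m ≤ M) (k : ℕ) :
    (2 * m - M + δ) * (coeffD M α β δ m *
        (latticeBasis (δ - M) m (k + 1) - latticeBasis (δ - M) ↑(m - 1) (k + 1))) =
      (k + 1) * (m - M - 1 - α + δ) * (m - M - 1 - β) * (m + δ) * (k - m) *
        latticeBasis (δ - M) m k := by
  rcases m with _ | m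
  · rw [coeffD_zero, Nat.cast_zero, sub_zero, mul_assoc _ (k : ℝ), natCast_mul_latticeBasis_zero]
    ring
  · obtain ⟨-, h₀, h₁⟩ := (coeffD_succ_ne_zero_iff m).1 (h.down_ne_zero m hm)
    have diff := latticeBasis_backward_diff (δ - M) ↑(m + 1) k
    rw [Nat.add_sub_cancel, coeffD]
    rw [Nat.cast_succ, add_sub_cancel_right] at *
    have h₂ : 2 * ((m : ℝ) + 1) - M - 1 + δ ≠ 0 := by convert h₀ using 1; ring
    generalize latticeBasis (δ - M) (m + 1) (k + 1) - latticeBasis (δ - M) m (k + 1) = Δ at diff ⊢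
    field_simp
    linear_combination
      (m + 1 - M - 1 - α + δ) * (m + 1 - M - 1 - β) * (m + 1 + δ) * diff

lemma two_mul_sub_add_ne_zero (h : IsIrreducibleUpTo (coeffB M α β δ) (coeffD M α β δ) M)
    {m : ℕ} (hm : m ≤ M) (hM : 0 < M) :
    2 * (m : ℝ) - M + δ ≠ 0 := by
  rcases hm.lt_or_eq with hlt | rfl
  · exact ((coeffB_ne_zero_iff m).1 (h.up_ne_zero m hlt)).2.1
  · obtain ⟨l, rfl⟩ := Nat.exists_eq_succ_of_ne_zero hM.ne'
    rw [Nat.cast_succ]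
    simpa using ((coeffD_succ_ne_zero_iff l).1 (h.down_ne_zero l l.lt_succ_self)).2.2

lemma diffOp_latticeBasis_succ (h : IsIrreducibleUpTo (coeffB M α β δ) (coeffD M α β δ) M)
    {m : ℕ} (hm : m ≤ M) (k : ℕ) :
    diffOp (coeffB M α β δ) (coeffD M α β δ) (fun i => latticeBasis (δ - M) i (k + 1)) m =
      (k + 1) * (k + 1 + (α + β + 1)) * latticeBasis (δ - M) m (k + 1) -
        (k + 1) * ((k + (α + 1)) * (k + (β + δ + 1)) * (k - M)) * latticeBasis (δ - M) m k := by
  rcases M.eq_zero_or_pos with rfl | hM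
  · obtain rfl := Nat.le_zero.1 hm
    rw [diffOp, h.last_eq_zero, coeffD_zero, Nat.cast_zero, latticeBasis_succ (δ - 0) 0]
    linear_combination (k + 1) * ((k + (α + 1)) * (k + (β + δ + 1)) -
      (k + 1 + (α + β + 1)) * (k + δ)) * natCast_mul_latticeBasis_zero (δ - 0) k
  · refine mul_left_cancel₀ (two_mul_sub_add_ne_zero h hm hM) ?_
    rw [diffOp, mul_sub, coeffB_mul_forward_diff h hm, coeffD_mul_backward_diff h hm,
      latticeBasis_succ]
    ring

/-- The coefficient of `latticeBasis (δ - M) m k` in `racah M α β δ n m`. -/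
def racahCoeff (M : ℕ) (α β δ : ℝ) (n k : ℕ) : ℝ :=
  latticeBasis (α + β + 1) n k /
    (poch (α + 1) k * poch (β + δ + 1) k * poch (-(M : ℝ)) k * k.factorial)

lemma racah_eq_sum (n m : ℕ) :
    racah M α β δ n m =
      ∑ k ∈ range (n + 1), racahCoeff M α β δ n k * latticeBasis (δ - M) m k := by
  refine sum_congr rfl fun k _ => ?_
  rw [racahCoeff, latticeBasis, latticeBasis, div_mul_eq_mul_div, sub_add_eq_add_sub, add_sub_assoc,
    mul_assoc, add_assoc (n : ℝ), add_assoc (n : ℝ)]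

lemma racah_eq_sum_of_le {n L : ℕ} (hn : n ≤ L) (m : ℕ) :
    racah M α β δ n m =
      ∑ k ∈ range (L + 1), racahCoeff M α β δ n k * latticeBasis (δ - M) m k := by
  rw [racah_eq_sum]
  refine sum_subset (range_subset_range.2 (by omega)) fun k _ hk => ?_
  have hk : n < k := by simpa using hk
  rw [racahCoeff, latticeBasis_natCast_eq_zero _ hk, zero_div, zero_mul]

lemma racah_zero_left (m : ℕ) : racah M α β δ 0 m = 1 := by
  simp [racah, poch_zero]

/- Duality exchanges `α + β + 1` and `δ - M` and fixes `α` and `β + δ`. -/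
lemma racah_dual (n m : ℕ) :
    racah M α (δ - M - 1 - α) (α + β + M + 1) m n = racah M α β δ n m := by
  rw [racah_eq_sum_of_le (le_max_left m n), racah_eq_sum_of_le (le_max_right m n)]
  refine sum_congr rfl fun k _ => ?_
  rw [racahCoeff, racahCoeff, show α + (δ - M - 1 - α) + 1 = δ - M by ring,
    show α + β + M + 1 - M = α + β + 1 by ring,
    show δ - M - 1 - α + (α + β + M + 1) + 1 = β + δ + 1 by ring]
  ring

lemma coeffB_dual : coeffB M α (δ - M - 1 - α) (α + β + M + 1) = coeffA M α β δ := by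
  funext n
  unfold coeffB coeffA
  congr 1 <;> ring

lemma coeffD_dual : coeffD M α (δ - M - 1 - α) (α + β + M + 1) = coeffC M α β δ := by
  funext n
  unfold coeffD coeffC
  congr 1 <;> ring

lemma racahCoeff_succ_mul (h : IsIrreducibleUpTo (coeffB M α β δ) (coeffD M α β δ) M)
    (n : ℕ) {k : ℕ} (hk : k < M) :
    racahCoeff M α β δ n (k + 1) *
        ((k + 1) * ((k + (α + 1)) * (k + (β + δ + 1)) * (k - M))) =
      racahCoeff M α β δ n k * ((k - n) * (k + n + (α + β + 1))) := by
  obtain ⟨⟨hα, hβ, hM, -⟩, -⟩ := (coeffB_ne_zero_iff k).1 (h.up_ne_zero k hk)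
  have hk1 : (k : ℝ) + 1 ≠ 0 := k.cast_add_one_ne_zero
  rw [racahCoeff, racahCoeff, latticeBasis_succ, poch_succ, poch_succ, poch_succ,
    Nat.factorial_succ, Nat.cast_mul, Nat.cast_succ, div_mul_eq_mul_div, div_mul_eq_mul_div]
  rw [← mul_div_mul_right _ (poch (α + 1) k * _ * _ * _)
    (mul_ne_zero (mul_ne_zero (mul_ne_zero hα hβ) hM) hk1)]
  congr 1 <;> ring

theorem racah_difference_equation (h : IsIrreducibleUpTo (coeffB M α β δ) (coeffD M α β δ) M)
    {n m : ℕ} (hn : n ≤ M) (hm : m ≤ M) :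
    diffOp (coeffB M α β δ) (coeffD M α β δ) (racah M α β δ n) m =
      n * (n + α + β + 1) * racah M α β δ n m := by
  set c := racahCoeff M α β δ n
  set φ : ℕ → ℕ → ℝ := fun k i => latticeBasis (δ - M) i k
  set t := α + β + 1
  have expansion : racah M α β δ n = fun i => ∑ k ∈ range (n + 1), c k * φ k i :=
    funext fun i => racah_eq_sum n i
  have apply_basis : ∀ k ∈ range n,
      c (k + 1) * diffOp (coeffB M α β δ) (coeffD M α β δ) (φ (k + 1)) m =
        ↑(k + 1) * (↑(k + 1) + t) * (c (k + 1) * φ (k + 1) m) -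
          (k - n) * (k + n + t) * (c k * φ k m) := fun k hk => by
    rw [diffOp_latticeBasis_succ h hm]
    push_cast
    linear_combination -φ k m * racahCoeff_succ_mul h n ((mem_range.1 hk).trans_le hn)
  calc diffOp (coeffB M α β δ) (coeffD M α β δ) (racah M α β δ n) m
      = ∑ k ∈ range n, c (k + 1) * diffOp (coeffB M α β δ) (coeffD M α β δ) (φ (k + 1)) m := by
        rw [expansion, diffOp_sum, sum_range_succ']
        simp [φ, diffOp, latticeBasis_zero]
    _ = ∑ k ∈ range (n + 1), k * (k + t) * (c k * φ k m) -
          ∑ k ∈ range (n + 1), (k - n) * (k + n + t) * (c k * φ k m) := by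
        rw [sum_congr rfl apply_basis, sum_sub_distrib, sum_range_succ',
          sum_range_succ (fun k : ℕ => ((k : ℝ) - n) * (k + n + t) * (c k * φ k m))]
        simp
    _ = n * (n + α + β + 1) * racah M α β δ n m := by
        rw [expansion, mul_sum, ← sum_sub_distrib]
        exact sum_congr rfl fun k _ => by ring

theorem racah_recurrence (h : IsIrreducibleUpTo (coeffA M α β δ) (coeffC M α β δ) M) {n m : ℕ}
    (hn : n ≤ M) (hm : m ≤ M) :
    diffOp (coeffA M α β δ) (coeffC M α β δ) (fun i => racah M α β δ i m) n =
      m * (m - M + δ) * racah M α β δ n m := by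
  rw [← coeffB_dual, ← coeffD_dual] at h ⊢
  simp only [← racah_dual (β := β)]
  rw [racah_difference_equation h hm hn]
  ring

lemma racah_eigenvalue_ne (h : IsIrreducibleUpTo (coeffA M α β δ) (coeffC M α β δ) M)
    {n n' : ℕ} (hn : n ≤ M) (hn' : n' ≤ M) (hne : n ≠ n') :
    (n : ℝ) * (n + α + β + 1) ≠ n' * (n' + α + β + 1) := by
  have sum_ne : ((n + n' : ℕ) : ℝ) + (α + β + 1) ≠ 0 := by
    rw [← coeffB_dual, ← coeffD_dual] at h
    obtain ⟨i, hi⟩ := Nat.even_or_odd' (n + n')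
    obtain ⟨-, heven, hodd⟩ := (coeffB_ne_zero_iff i).1 (h.up_ne_zero i (by omega))
    rcases hi with hi | hi <;> rw [hi] <;> push_cast
    · convert heven using 1; ring
    · convert hodd using 1; ring
  have sub_ne : (n : ℝ) - n' ≠ 0 := sub_ne_zero.2 (Nat.cast_injective.ne hne)
  intro heq
  refine mul_ne_zero sub_ne sum_ne ?_
  push_cast
  linear_combination heq

theorem racah_orthogonal (hBD : IsIrreducibleUpTo (coeffB M α β δ) (coeffD M α β δ) M)
    (hAC : IsIrreducibleUpTo (coeffA M α β δ) (coeffC M α β δ) M)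
    {n n' : ℕ} (hn : n ≤ M) (hn' : n' ≤ M) (hne : n ≠ n') :
    weightedInner (reversibleWeight (coeffB M α β δ) (coeffD M α β δ)) M
      (racah M α β δ n) (racah M α β δ n') = 0 :=
  hBD.weightedInner_eq_zero_of_eigenvalue_ne (fun _ => racah_difference_equation hBD hn)
    (fun _ => racah_difference_equation hBD hn') (racah_eigenvalue_ne hAC hn hn' hne)

/- Sum `diffOp_latticeBasis_succ` against the weight: the image of `diffOp` has total mass zero. -/
lemma moment_succ (h : IsIrreducibleUpTo (coeffB M α β δ) (coeffD M α β δ) M) (k : ℕ) :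
    (k + 1 + (α + β + 1)) *
        weightedInner (reversibleWeight (coeffB M α β δ) (coeffD M α β δ)) M
          (fun m => latticeBasis (δ - M) m (k + 1)) 1 =
      (k + (α + 1)) * (k + (β + δ + 1)) * (k - M) *
        weightedInner (reversibleWeight (coeffB M α β δ) (coeffD M α β δ)) M
          (fun m => latticeBasis (δ - M) m k) 1 := by
  have total := h.weightedInner_diffOp_one fun m => latticeBasis (δ - M) m (k + 1)
  rw [weightedInner_congr_left fun m hm => diffOp_latticeBasis_succ h hm k,
    weightedInner_sub_left, weightedInner_const_mul_left, weightedInner_const_mul_left] at total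
  refine mul_left_cancel₀ (k.cast_add_one_ne_zero (R := ℝ)) ?_
  linear_combination total

lemma poch_mul_moment (h : IsIrreducibleUpTo (coeffB M α β δ) (coeffD M α β δ) M) (k : ℕ) :
    poch (α + β + 2) k * weightedInner (reversibleWeight (coeffB M α β δ) (coeffD M α β δ)) M
        (fun m => latticeBasis (δ - M) m k) 1 =
      poch (α + 1) k * poch (β + δ + 1) k * poch (-(M : ℝ)) k *
        weightedInner (reversibleWeight (coeffB M α β δ) (coeffD M α β δ)) M 1 1 := by
  induction k with
  | zero =>
    simp only [poch_zero, latticeBasis_zero, one_mul]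
    rfl
  | succ k ih =>
    simp only [poch_succ]
    linear_combination poch (α + β + 2) k * moment_succ h k +
      (k + (α + 1)) * (k + (β + δ + 1)) * (k - M) * ih

lemma moment_last (w : ℕ → ℝ) (s : ℝ) :
    weightedInner w M (fun m => latticeBasis s m M) 1 = w M * latticeBasis s M M := by
  rw [weightedInner, sum_range_succ, sum_eq_zero, zero_add, Pi.one_apply, mul_one]
  intro m hm
  rw [latticeBasis_natCast_eq_zero s (mem_range.1 hm), zero_mul, mul_zero]

lemma reversibleWeight_succ_ratio
    (h : IsIrreducibleUpTo (coeffB M α β δ) (coeffD M α β δ) M) {k : ℕ} (hk : k < M) :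
    reversibleWeight (coeffB M α β δ) (coeffD M α β δ) (k + 1) *
        ((k + 1) * (k - M - α + δ) * (k - M - β) * (k + 1 + δ) * (2 * k - M + δ)) =
      reversibleWeight (coeffB M α β δ) (coeffD M α β δ) k *
        ((k + α + 1) * (k + β + δ + 1) * (k - M) * (k - M + δ) * (2 * (k + 1) - M + δ)) := by
  have balance := reversibleWeight_succ_mul (B := coeffB M α β δ) (h.down_ne_zero k hk)
  obtain ⟨-, h₀, h₁⟩ := (coeffB_ne_zero_iff k).1 (h.up_ne_zero k hk)
  obtain ⟨-, -, h₂⟩ := (coeffD_succ_ne_zero_iff k).1 (h.down_ne_zero k hk)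
  rw [coeffD, coeffB, Nat.cast_succ,
    show 2 * ((k : ℝ) + 1) - M - 1 + δ = 2 * k - M + δ + 1 by ring, ← mul_div_assoc,
    ← mul_div_assoc, div_eq_div_iff (mul_ne_zero h₁ h₂) (mul_ne_zero h₀ h₁)] at balance
  refine mul_left_cancel₀ h₁ ?_
  linear_combination balance

lemma reversibleWeight_closed_form
    (h : IsIrreducibleUpTo (coeffB M α β δ) (coeffD M α β δ) M) {k : ℕ} (hk : k ≤ M) :
    reversibleWeight (coeffB M α β δ) (coeffD M α β δ) k * (k - M + δ) *
        (k.factorial * poch (-M - (α - δ)) k * poch (-M - β) k * poch (δ + 1) k) =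
      poch (α + 1) k * poch (β + δ + 1) k * poch (-(M : ℝ)) k * poch (-M - (-δ - 1)) k *
        (2 * k - M + δ) := by
  induction k with
  | zero => simp [reversibleWeight_zero, poch_zero]
  | succ k ih =>
    refine mul_left_cancel₀ ((coeffB_ne_zero_iff k).1 (h.up_ne_zero k hk)).2.1 ?_
    simp only [poch_succ, Nat.factorial_succ]
    push_cast
    linear_combination
      (k + 1 - M + δ) * (k.factorial * poch (-M - (α - δ)) k * poch (-M - β) k * poch (δ + 1) k) *
          reversibleWeight_succ_ratio h hk +
        (k + α + 1) * (k + β + δ + 1) * (k - M) * (2 * (k + 1) - M + δ) * (k + 1 - M + δ) *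
          ih (Nat.le_of_succ_le hk)

lemma reversibleWeight_last_mul_latticeBasis
    (h : IsIrreducibleUpTo (coeffB M α β δ) (coeffD M α β δ) M) :
    reversibleWeight (coeffB M α β δ) (coeffD M α β δ) M * latticeBasis (δ - M) M M *
        (poch (α - δ + 1) M * poch (β + 1) M) =
      poch (α + 1) M * poch (β + δ + 1) M * poch (-(M : ℝ)) M * poch (-δ) M := by
  rcases M.eq_zero_or_pos with rfl | hM
  · simp [reversibleWeight_zero, latticeBasis_zero, poch_zero]
  have sign : ((-1 : ℝ) ^ M) ^ 2 = 1 := by rw [← pow_mul, mul_comm, pow_mul]; simp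
  have shift : poch δ M * (M + δ) = δ * poch (δ + 1) M := by
    rw [← poch_succ_left, poch_succ, add_comm]
  have top : poch (-(M : ℝ)) M = (-1) ^ M * M.factorial := by
    simpa [poch_one] using poch_neg_natCast_sub M 0
  have closed := reversibleWeight_closed_form h le_rfl
  simp only [poch_neg_natCast_sub, sub_add_cancel] at closed
  rw [latticeBasis, add_sub_cancel]
  refine mul_left_cancel₀ (two_mul_sub_add_ne_zero h le_rfl hM) ?_
  set w := reversibleWeight (coeffB M α β δ) (coeffD M α β δ) M
  set xy := poch (α - δ + 1) M * poch (β + 1) M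
  linear_combination w * poch (-(M : ℝ)) M * xy * shift + w * δ * poch (δ + 1) M * xy * top +
    (-1) ^ M * closed -
    (w * δ * M.factorial * poch (δ + 1) M * xy * (-1) ^ M -
      poch (α + 1) M * poch (β + δ + 1) M * poch (-(M : ℝ)) M * poch (-δ) M * (M + δ)) * sign

theorem kappa_mul_total_mass (h : IsIrreducibleUpTo (coeffB M α β δ) (coeffD M α β δ) M)
    (hκ : kappa M α β δ ≠ 0) :
    kappa M α β δ *
      weightedInner (reversibleWeight (coeffB M α β δ) (coeffD M α β δ)) M 1 1 = 1 := by
  have denom_ne : poch (α + 1) M * poch (β + δ + 1) M * poch (-(M : ℝ)) M ≠ 0 := by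
    have factors := fun i hi => (coeffB_ne_zero_iff i).1 (h.up_ne_zero i hi)
    refine mul_ne_zero (mul_ne_zero ?_ ?_) ?_ <;> refine poch_ne_zero fun i hi => ?_
    · convert (factors i hi).1.1 using 1; ring
    · convert (factors i hi).1.2.1 using 1; ring
    · convert (factors i hi).1.2.2.1 using 1; ring
  have moment := poch_mul_moment h M
  have last := reversibleWeight_last_mul_latticeBasis h
  rw [moment_last] at moment
  simp only [kappa, ne_eq, div_eq_zero_iff, not_or] at hκ
  rw [kappa, div_mul_eq_mul_div, div_eq_one_iff_eq hκ.2]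
  refine mul_left_cancel₀ denom_ne ?_
  linear_combination poch (α + β + 2) M * last - poch (α - δ + 1) M * poch (β + 1) M * moment

theorem racah_norm (h : PosCond M α β δ) {n : ℕ} (hn : n ≤ M) :
    kappa M α β δ * (reversibleWeight (coeffA M α β δ) (coeffC M α β δ) n *
      weightedInner (reversibleWeight (coeffB M α β δ) (coeffD M α β δ)) M
        (racah M α β δ n) (racah M α β δ n)) = 1 := by
  have hBD := h.isIrreducibleUpTo_coeffB_coeffD
  have hAC := h.isIrreducibleUpTo_coeffA_coeffC
  rw [hAC.reversibleWeight_mul_norm (fun _ hn _ hm => racah_recurrence hAC hn hm)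
    (fun _ hn _ hn' => racah_orthogonal hBD hAC hn hn') hn,
    show racah M α β δ 0 = 1 from funext racah_zero_left]
  exact kappa_mul_total_mass hBD h.2.2.ne'

end RacahBlock

section Orthonormality

variable {R : Type*} [CommRing R]

/-- The first `M + 1` rows of the infinite matrix `P`, truncated to the first `M + 1` columns, are
orthonormal. -/
def IsOrthonormalUpTo (P : ℕ → ℕ → R) (M : ℕ) : Prop :=
  ∀ n ≤ M, ∀ n' ≤ M, ∑ m ∈ range (M + 1), P n m * P n' m = if n = n' then 1 else 0

lemma IsOrthonormalUpTo.swap {P : ℕ → ℕ → R} {M : ℕ} (h : IsOrthonormalUpTo P M) :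
    IsOrthonormalUpTo (Function.swap P) M := by
  let A : Matrix (Fin (M + 1)) (Fin (M + 1)) R := Matrix.of fun n m => P n m
  have rows : A * A.transpose = 1 := by
    ext i j
    have hij := h i (Fin.is_le i) j (Fin.is_le j)
    rw [sum_range] at hij
    simpa [A, Matrix.mul_apply, Matrix.one_apply, Fin.ext_iff] using hij
  have columns : A.transpose * A = 1 := mul_eq_one_comm.1 rows
  intro m hm m' hm'
  have hmm' := congrFun (congrFun columns ⟨m, Nat.lt_succ_of_le hm⟩) ⟨m', Nat.lt_succ_of_le hm'⟩
  rw [sum_range]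
  simpa [A, Matrix.mul_apply, Matrix.one_apply, Fin.ext_iff] using hmm'

lemma prod_div_sqrt_mul_self {f g : ℕ → ℝ} {n : ℕ} (h : ∀ i < n, 0 < f i * g (i + 1)) :
    (∏ i ∈ range n, f i / √(f i * g (i + 1))) * (∏ i ∈ range n, f i / √(f i * g (i + 1))) =
      reversibleWeight f g n := by
  rw [reversibleWeight, ← prod_mul_distrib]
  refine prod_congr rfl fun i hi => ?_
  have hpos := h i (mem_range.1 hi)
  rw [div_mul_div_comm, Real.mul_self_sqrt hpos.le,
    mul_div_mul_left _ _ (left_ne_zero_of_mul hpos.ne')]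

theorem Pfun_isOrthonormalUpTo {M : ℕ} {α β δ : ℝ} (h : PosCond M α β δ) :
    IsOrthonormalUpTo (Pfun M α β δ) M := by
  intro n hn n' hn'
  set a : ℕ → ℝ := fun n => ∏ i ∈ range n,
    coeffA M α β δ i / √(coeffA M α β δ i * coeffC M α β δ (i + 1))
  have pull_out : ∑ m ∈ range (M + 1), Pfun M α β δ n m * Pfun M α β δ n' m =
      kappa M α β δ * (a n * a n' *
        weightedInner (reversibleWeight (coeffB M α β δ) (coeffD M α β δ)) M
          (racah M α β δ n) (racah M α β δ n')) := by
    simp only [weightedInner, mul_sum]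
    refine sum_congr rfl fun m hm => ?_
    rw [← prod_div_sqrt_mul_self fun j hj => h.2.1 j (hj.trans_le (mem_range_succ_iff.1 hm)),
      ← Real.mul_self_sqrt h.2.2.le]
    simp only [Pfun, a]
    ring
  rw [pull_out]
  split_ifs with heq
  · subst heq
    rw [prod_div_sqrt_mul_self fun i hi => h.1 i (hi.trans_le hn), racah_norm h hn]
  · rw [racah_orthogonal h.isIrreducibleUpTo_coeffB_coeffD h.isIrreducibleUpTo_coeffA_coeffC
      hn hn' heq, mul_zero, mul_zero]

end Orthonormality

section TriangularProduct

variable {R : Type*} [CommRing R] {N : ℕ} {P Q : ℕ → ℕ → ℕ → R}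

/-- On the triangles `n₁ + n₂ ≤ N` and `m₁ + m₂ ≤ N`, the product of the block-diagonal matrices
`(n₁, n₂) ↦ (m₁, n₂)` with blocks `P n₂` and `(m₁, n₂) ↦ (m₁, m₂)` with blocks `Q m₁`; the
intermediate index `(m₁, n₂)` is confined to the same triangle. -/
def triangularProduct (N : ℕ) (P Q : ℕ → ℕ → ℕ → R) (n1 n2 m1 m2 : ℕ) : R :=
  if n1 + n2 ≤ N ∧ m1 + m2 ≤ N ∧ n2 + m1 ≤ N then P n2 n1 m1 * Q m1 n2 m2 else 0

lemma triangularProduct_swap (n1 n2 m1 m2 : ℕ) :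
    triangularProduct N (fun a => Function.swap (Q a)) (fun b => Function.swap (P b)) m2 m1 n2 n1 =
      triangularProduct N P Q n1 n2 m1 m2 :=
  if_congr (by omega) (mul_comm _ _) rfl

lemma sum_triangle_comm (N : ℕ) (f : ℕ → ℕ → R) :
    ∑ a ∈ range (N + 1), ∑ b ∈ range (N + 1 - a), f a b =
      ∑ b ∈ range (N + 1), ∑ a ∈ range (N + 1 - b), f a b :=
  sum_comm' fun a b => by simp only [mem_range]; omega

lemma sum_triangularProduct_mul_block
    (hQ : ∀ a ≤ N, IsOrthonormalUpTo (Q a) (N - a)) {n1 n2 n1' n2' m1 : ℕ} (h : n1 + n2 ≤ N)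
    (h' : n1' + n2' ≤ N) (hm1 : m1 ≤ N) :
    ∑ m2 ∈ range (N + 1 - m1),
        triangularProduct N P Q n1 n2 m1 m2 * triangularProduct N P Q n1' n2' m1 m2 =
      if n2 = n2' ∧ m1 < N - n2 + 1 then P n2 n1 m1 * P n2 n1' m1 else 0 := by
  by_cases hmid : n2 + m1 ≤ N ∧ n2' + m1 ≤ N
  · have factor : ∀ m2 ∈ range (N + 1 - m1),
        triangularProduct N P Q n1 n2 m1 m2 * triangularProduct N P Q n1' n2' m1 m2 =
          P n2 n1 m1 * P n2' n1' m1 * (Q m1 n2 m2 * Q m1 n2' m2) := fun m2 hm2 => by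
      have hm : m1 + m2 ≤ N := by have := mem_range.1 hm2; omega
      rw [triangularProduct, triangularProduct, if_pos ⟨h, hm, hmid.1⟩, if_pos ⟨h', hm, hmid.2⟩]
      ring
    rw [sum_congr rfl factor, ← mul_sum, Nat.sub_add_comm hm1,
      hQ m1 hm1 n2 (by omega) n2' (by omega)]
    by_cases heq : n2 = n2'
    · subst heq
      rw [if_pos rfl, if_pos ⟨rfl, by omega⟩, mul_one]
    · simp [heq]
  · rw [if_neg (by omega)]
    refine sum_eq_zero fun m2 _ => ?_
    unfold triangularProduct
    rcases not_and_or.1 hmid with hout | hout <;> simp [hout]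

theorem sum_triangularProduct_mul (hP : ∀ b ≤ N, IsOrthonormalUpTo (P b) (N - b))
    (hQ : ∀ a ≤ N, IsOrthonormalUpTo (Q a) (N - a)) {n1 n2 n1' n2' : ℕ} (h : n1 + n2 ≤ N)
    (h' : n1' + n2' ≤ N) :
    ∑ m1 ∈ range (N + 1), ∑ m2 ∈ range (N + 1 - m1),
        triangularProduct N P Q n1 n2 m1 m2 * triangularProduct N P Q n1' n2' m1 m2 =
      if n1 = n1' ∧ n2 = n2' then 1 else 0 := by
  rw [sum_congr rfl fun m1 hm1 =>
    sum_triangularProduct_mul_block hQ h h' (mem_range_succ_iff.1 hm1)]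
  by_cases heq : n2 = n2'
  · subst heq
    have restrict : (range (N + 1)).filter (· < N - n2 + 1) = range (N - n2 + 1) := by
      ext m1
      simp only [mem_filter, mem_range]
      omega
    simp only [true_and, and_true]
    rw [← sum_filter, restrict, hP n2 (by omega) n1 (by omega) n1' (by omega)]
  · simp [heq]

theorem sum_triangularProduct_mul_dual (hP : ∀ b ≤ N, IsOrthonormalUpTo (P b) (N - b))
    (hQ : ∀ a ≤ N, IsOrthonormalUpTo (Q a) (N - a)) {m1 m2 m1' m2' : ℕ} (h : m1 + m2 ≤ N)
    (h' : m1' + m2' ≤ N) :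
    ∑ n1 ∈ range (N + 1), ∑ n2 ∈ range (N + 1 - n1),
        triangularProduct N P Q n1 n2 m1 m2 * triangularProduct N P Q n1 n2 m1' m2' =
      if m1 = m1' ∧ m2 = m2' then 1 else 0 := by
  rw [sum_triangle_comm]
  simp only [← triangularProduct_swap (P := P) (Q := Q), and_comm (a := m1 = m1')]
  exact sum_triangularProduct_mul (fun a ha => (hQ a ha).swap) (fun b hb => (hP b hb).swap)
    (by omega) (by omega)

end TriangularProduct

theorem stmt16_general (j0 j1 j2 j3 j4 : ℝ) (N : ℕ)
    (hpos1 : ∀ n2 : ℕ, n2 ≤ N →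
      PosCond (N - n2) (-2*j2 - 1) (-2*j1 - 1) ((N : ℝ) - n2 - 2*j2 + 2*j3 + 1))
    (hpos2 : ∀ m1 : ℕ, m1 ≤ N →
      PosCond (N - m1) (-2*j0 - 1) (-2*j4 - 1) ((N : ℝ) - m1 - 2*j0 - 2*j1 - 1)) :
    (∀ n1 n2 n1' n2' : ℕ, n1 + n2 ≤ N → n1' + n2' ≤ N →
      (∑ m1 ∈ Finset.range (N + 1), ∑ m2 ∈ Finset.range (N + 1 - m1),
        Tratnik j0 j1 j2 j3 j4 N n1 n2 m1 m2 * Tratnik j0 j1 j2 j3 j4 N n1' n2' m1 m2)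
        = if n1 = n1' ∧ n2 = n2' then 1 else 0) ∧
    (∀ m1 m2 m1' m2' : ℕ, m1 + m2 ≤ N → m1' + m2' ≤ N →
      (∑ n1 ∈ Finset.range (N + 1), ∑ n2 ∈ Finset.range (N + 1 - n1),
        Tratnik j0 j1 j2 j3 j4 N n1 n2 m1 m2 * Tratnik j0 j1 j2 j3 j4 N n1 n2 m1' m2')
        = if m1 = m1' ∧ m2 = m2' then 1 else 0) := by
  have hP := fun b hb => Pfun_isOrthonormalUpTo (hpos1 b hb)
  have hQ := fun a ha => Pfun_isOrthonormalUpTo (hpos2 a ha)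
  exact ⟨fun _ _ _ _ => sum_triangularProduct_mul hP hQ,
    fun _ _ _ _ => sum_triangularProduct_mul_dual hP hQ⟩

/-- Unitarity of the Tratnik functions. -/
theorem stmt16 (j0 j1 j2 j3 j4 : ℝ) (N : ℕ)
    (h12 : j1 ≥ j2) (h24 : j2 ≥ j4) (h04 : j0 ≥ j4)
    (h0 : j0 ≥ 0) (h1 : j1 ≥ 0) (h2 : j2 ≥ 0) (h3 : j3 ≥ 0) (h4 : j4 ≥ 0)
    (hup : j1 + j2 + j0 + j4 ≥ j3) (hlow : j3 ≥ j1 + j2 + j0 - j4)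
    (hN : 0 < N) (hNdef : (N : ℝ) = j1 + j2 - j3 + j4 + j0)
    (hpos1 : ∀ n2 : ℕ, n2 ≤ N →
      PosCond (N - n2) (-2*j2 - 1) (-2*j1 - 1) ((N : ℝ) - n2 - 2*j2 + 2*j3 + 1))
    (hpos2 : ∀ m1 : ℕ, m1 ≤ N →
      PosCond (N - m1) (-2*j0 - 1) (-2*j4 - 1) ((N : ℝ) - m1 - 2*j0 - 2*j1 - 1)) :
    (∀ n1 n2 n1' n2' : ℕ, n1 + n2 ≤ N → n1' + n2' ≤ N →
      (∑ m1 ∈ Finset.range (N + 1), ∑ m2 ∈ Finset.range (N + 1 - m1),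
        Tratnik j0 j1 j2 j3 j4 N n1 n2 m1 m2 * Tratnik j0 j1 j2 j3 j4 N n1' n2' m1 m2)
        = if n1 = n1' ∧ n2 = n2' then 1 else 0) ∧
    (∀ m1 m2 m1' m2' : ℕ, m1 + m2 ≤ N → m1' + m2' ≤ N →
      (∑ n1 ∈ Finset.range (N + 1), ∑ n2 ∈ Finset.range (N + 1 - n1),
        Tratnik j0 j1 j2 j3 j4 N n1 n2 m1 m2 * Tratnik j0 j1 j2 j3 j4 N n1 n2 m1' m2')
        = if m1 = m1' ∧ m2 = m2' then 1 else 0) :=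
  stmt16_general j0 j1 j2 j3 j4 N hpos1 hpos2
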